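/- arXiv:1705.10239 — 7 statements merged into one kernel-verified Lean document; each statement's English description precedes it below -/
import Mathlib

section
/- Let I = (G, N, 𝒰) be an instance of connected fair division in which G = (V, E) is a tree with at least n vertices, and let (q_i)_{i ∈ N} be a family of rational numbers such that mms_i(I) ≥ q_i for every player i ∈ N. Then there exists a valid allocation π such that u_i(π(i)) ≥ q_i for every player i ∈ N. -/
/-!
Each player can be given one of the parts of her own partition; the utilities play no further role.
Root the tree at `r`, and among all parts of all players choose a part `A` whose vertex `v` closest
to `r` is as deep as possible. Every part meeting `A` contains `v` (`top_mem_of_inter`), so, the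
parts of one player being disjoint, `A` meets at most one part of each other player. Give `A` to its
owner and discard the parts meeting it: each of the remaining `n - 1` players keeps at least `n - 1`
parts disjoint from `A`, and induction finishes the selection (`exists_disjoint_selection`).
-/

/-- The total utility of a set of items under an additive utility function `u`. -/
noncomputable def setVal {V : Type*} (u : V → ℚ) (X : Set V) : ℚ := ∑ᶠ x ∈ X, u x

/-- A set of items induces a connected subgraph of `G`. -/
def ConnOn {V : Type*} (G : SimpleGraph V) (X : Set V) : Prop := (G.induce X).Connected

/-- A (possibly empty) bundle is connected in `G`. -/
def PreconnOn {V : Type*} (G : SimpleGraph V) (X : Set V) : Prop := (G.induce X).Preconnected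

/-- An allocation is valid if every bundle is connected in `G` and bundles are
pairwise disjoint. -/
def ValidAlloc {V N : Type*} (G : SimpleGraph V) (π : N → Set V) : Prop :=
  (∀ i, PreconnOn G (π i)) ∧ ∀ i j, i ≠ j → Disjoint (π i) (π j)

/-- A partition of the whole vertex set into `n` nonempty parts, each inducing a
connected subgraph of `G`. -/
def IsConnPartition {V : Type*} {n : ℕ} (G : SimpleGraph V) (P : Fin n → Set V) : Prop :=
  (∀ j, (P j).Nonempty) ∧ (∀ j, ConnOn G (P j)) ∧
    (∀ j k, j ≠ k → Disjoint (P j) (P k)) ∧ (⋃ j, P j) = Set.univ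

/-- Gavril's observation on subtrees of a rooted tree: if `v` is the vertex of `P` closest to the
root `r`, then a connected `Q` that meets `P` and reaches at least as close to `r` contains `v`.
The proof looks at the set of descendants of `v`, i.e. the vertices `y` such that every walk from
`r` to `y` visits `v`: it contains `P`, and it can only be left through `v`. -/
theorem top_mem_of_inter {V : Type*} {G : SimpleGraph V} (hG : G.IsTree) (r : V)
    {P Q : Set V} (hP : ConnOn G P) (hQ : ConnOn G Q) {v w x : V}
    (hvP : v ∈ P) (hvmin : ∀ y ∈ P, G.dist r v ≤ G.dist r y)
    (hwQ : w ∈ Q) (hwv : G.dist r w ≤ G.dist r v) (hxP : x ∈ P) (hxQ : x ∈ Q) : v ∈ Q := by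
  classical
  -- `x` is a descendant of `v`
  have hx : ∀ p : G.Walk r x, v ∈ p.support := by
    intro p
    obtain ⟨a, ha, hal⟩ := hG.connected.exists_path_of_dist r v
    obtain ⟨b, hb⟩ := (hP.preconnected ⟨v, hvP⟩ ⟨x, hxP⟩).exists_isPath
    let b' : G.Walk v x := b.map (SimpleGraph.Embedding.induce P).toHom
    have hb' : b'.IsPath := hb.map (SimpleGraph.Embedding.induce (G := G) P).injective
    have hbP : ∀ y ∈ b'.support, y ∈ P := by
      intro y hy
      have hs : b'.support = b.support.map (SimpleGraph.Embedding.induce P).toHom :=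
        SimpleGraph.Walk.support_map (SimpleGraph.Embedding.induce P).toHom b
      rw [hs, List.mem_map] at hy
      obtain ⟨z, -, rfl⟩ := hy
      exact z.2
    -- only the last vertex of the geodesic `a` lies in `P`, so `a` followed by `b'` is a path
    have haP : ∀ y ∈ a.support, y ∈ P → y = v := by
      intro y hy hyP
      have h1 := hvmin y hyP
      have h2 := SimpleGraph.dist_le (a.takeUntil y hy)
      have h3 := congrArg SimpleGraph.Walk.length (a.take_spec hy)
      rw [SimpleGraph.Walk.length_append] at h3
      exact SimpleGraph.Walk.eq_of_length_eq_zero (p := a.dropUntil y hy) (by omega)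
    have hab : (a.append b').IsPath := by
      rw [SimpleGraph.Walk.isPath_def, SimpleGraph.Walk.support_append]
      have hbn := hb'.support_nodup
      rw [← SimpleGraph.Walk.cons_tail_support] at hbn
      refine List.Nodup.append ha.support_nodup (List.nodup_cons.1 hbn).2 ?_
      intro y hy hy'
      have := haP y hy (hbP y (List.mem_of_mem_tail hy'))
      subst this
      exact (List.nodup_cons.1 hbn).1 hy'
    have huniq : p.bypass = a.append b' :=
      congrArg Subtype.val ((hG.isAcyclic.subsingleton_path r x).elim
        ⟨_, p.bypass_isPath⟩ ⟨_, hab⟩)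
    apply p.support_bypass_subset_support
    rw [huniq, SimpleGraph.Walk.mem_support_append_iff]
    exact Or.inl a.end_mem_support
  by_cases hw : ∀ p : G.Walk r w, v ∈ p.support
  · -- a descendant of `v` that is no deeper than `v` is `v` itself
    obtain ⟨p, -, hpl⟩ := hG.connected.exists_path_of_dist r w
    have hv := hw p
    have h2 := SimpleGraph.dist_le (p.takeUntil v hv)
    have h3 := congrArg SimpleGraph.Walk.length (p.take_spec hv)
    rw [SimpleGraph.Walk.length_append] at h3
    have : v = w := SimpleGraph.Walk.eq_of_length_eq_zero (p := p.dropUntil v hv) (by omega)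
    exact this ▸ hwQ
  · obtain ⟨c⟩ := hQ.preconnected ⟨x, hxQ⟩ ⟨w, hwQ⟩
    obtain ⟨d, -, hd1, hd2⟩ := c.exists_boundary_dart
      {y : Q | ∀ p : G.Walk r y, v ∈ p.support} hx hw
    simp only [Set.mem_ofPred_eq, not_forall] at hd1 hd2
    obtain ⟨p, hp⟩ := hd2
    have hadj : G.Adj d.snd d.fst := d.adj.symm
    have := hd1 (p.concat hadj)
    rw [SimpleGraph.Walk.support_concat, List.mem_append] at this
    rcases this with h | h
    · exact absurd h hp
    · rw [List.mem_singleton.1 h]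
      exact d.fst.2

/-- Greedy selection. The abstract hypothesis `htop` says that a set meeting `P i j` whose marked
vertex is no deeper contains the marked vertex `t i j`. Picking the deepest candidate then spoils
at most one candidate of every other player, because the sets of one player are disjoint. -/
theorem exists_disjoint_selection {V N J : Type*} [Nonempty J] (P : N → J → Set V)
    (hdisj : ∀ i j k, j ≠ k → Disjoint (P i j) (P i k))
    (t : N → J → V) (depth : V → ℕ)
    (htop : ∀ i j i' j', depth (t i' j') ≤ depth (t i j) → ¬ Disjoint (P i j) (P i' j') →
      t i j ∈ P i' j') (n : ℕ) :
    ∀ (S : Finset N) (T : N → Finset J), S.card = n → (∀ i ∈ S, n ≤ (T i).card) →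
      ∃ f : N → J, (∀ i ∈ S, f i ∈ T i) ∧
        ∀ i ∈ S, ∀ k ∈ S, i ≠ k → Disjoint (P i (f i)) (P k (f k)) := by
  classical
  induction n with
  | zero =>
    intro S T hS _
    rw [Finset.card_eq_zero] at hS
    subst hS
    exact ⟨fun _ => Classical.arbitrary J, by simp, by simp⟩
  | succ n ih =>
    intro S T hS hT
    have hne : (S.sigma T).Nonempty := by
      obtain ⟨i, hi⟩ : S.Nonempty := Finset.card_pos.1 (by omega)
      obtain ⟨j, hj⟩ : (T i).Nonempty := Finset.card_pos.1 (by have := hT i hi; omega)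
      exact ⟨⟨i, j⟩, Finset.mem_sigma.2 ⟨hi, hj⟩⟩
    obtain ⟨⟨a, b⟩, hab, hmax⟩ := Finset.exists_max_image (S.sigma T)
      (fun p => depth (t p.1 p.2)) hne
    obtain ⟨haS, hbT⟩ := Finset.mem_sigma.1 hab
    obtain ⟨f, hfT, hfd⟩ := ih (S.erase a)
      (fun i => (T i).filter fun j => Disjoint (P a b) (P i j))
      (by rw [Finset.card_erase_of_mem haS, hS]; omega) (by
        intro i hi
        have hiS := Finset.mem_of_mem_erase hi
        -- the discarded sets of player `i` all contain `t a b`, so there is at most one of them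
        have hone : ((T i).filter fun j => ¬ Disjoint (P a b) (P i j)).card ≤ 1 := by
          refine Finset.card_le_one.2 fun j hj k hk => ?_
          rw [Finset.mem_filter] at hj hk
          by_contra hjk
          exact Set.disjoint_left.1 (hdisj i j k hjk)
            (htop a b i j (hmax ⟨i, j⟩ (Finset.mem_sigma.2 ⟨hiS, hj.1⟩)) hj.2)
            (htop a b i k (hmax ⟨i, k⟩ (Finset.mem_sigma.2 ⟨hiS, hk.1⟩)) hk.2)
        have hsplit := Finset.card_filter_add_card_filter_not (s := T i)
          (fun j => Disjoint (P a b) (P i j))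
        have := hT i hiS
        omega)
    have hfa : ∀ i ∈ S, i ≠ a → f i ∈ T i ∧ Disjoint (P a b) (P i (f i)) := fun i hi hia =>
      Finset.mem_filter.1 (hfT i (Finset.mem_erase.2 ⟨hia, hi⟩))
    refine ⟨Function.update f a b, fun i hi => ?_, fun i hi k hk hik => ?_⟩
    · by_cases hia : i = a
      · subst hia
        simpa using hbT
      · simpa [hia] using (hfa i hi hia).1
    · by_cases hia : i = a
      · subst hia
        simpa [Ne.symm hik] using (hfa k hk (Ne.symm hik)).2
      · by_cases hka : k = a
        · subst hka
          simpa [hia] using (hfa i hi hia).2.symm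
        · simpa [hia, hka] using
            hfd i (Finset.mem_erase.2 ⟨hia, hi⟩) k (Finset.mem_erase.2 ⟨hka, hk⟩) hik

/-- If `G` is a tree with at least `n` vertices and `mms_i(I) ≥ q_i` for each player `i`
(equivalently, each player `i` has a connected partition all of whose parts she values at
least `q_i`), then there is a valid allocation giving each player `i` value at least `q_i`. -/
theorem prop_thm_mms_tree {V N : Type*} [Fintype V] [Fintype N] [Nonempty N]
    (G : SimpleGraph V) (hG : G.IsTree)
    (hcard : Fintype.card N ≤ Fintype.card V)
    (u : N → V → ℚ) (hnn : ∀ i v, 0 ≤ u i v) (hsum : ∀ i, ∑ v, u i v = 1)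
    (q : N → ℚ)
    (hmms : ∀ i : N, ∃ P : Fin (Fintype.card N) → Set V,
      IsConnPartition G P ∧ ∀ j, q i ≤ setVal (u i) (P j)) :
    ∃ π : N → Set V, ValidAlloc G π ∧ ∀ i, q i ≤ setVal (u i) (π i) := by
  classical
  choose P hP hq using hmms
  obtain ⟨r⟩ := hG.connected.nonempty
  -- `t i j` is a vertex of `P i j` closest to the root
  have hmin : ∀ i j, ∃ v ∈ P i j, ∀ y ∈ P i j, G.dist r v ≤ G.dist r y := fun i j =>
    Set.exists_min_image (P i j) (G.dist r) (Set.toFinite _) ((hP i).1 j)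
  choose t htP htmin using hmin
  have : Nonempty (Fin (Fintype.card N)) := ⟨⟨0, Fintype.card_pos⟩⟩
  obtain ⟨f, -, hf⟩ := exists_disjoint_selection P (fun i => (hP i).2.2.1) t (G.dist r)
    (fun i j i' j' hle hnd => by
      obtain ⟨x, hx, hx'⟩ := Set.not_disjoint_iff.1 hnd
      exact top_mem_of_inter hG r ((hP i).2.1 j) ((hP i').2.1 j') (htP i j) (htmin i j)
        (htP i' j') hle hx hx')
    (Fintype.card N) Finset.univ (fun _ => Finset.univ) Finset.card_univ (by simp)
  exact ⟨fun i => P i (f i), ⟨fun i => ((hP i).2.1 (f i)).preconnected,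
    fun i k hik => hf i (Finset.mem_univ i) k (Finset.mem_univ k) hik⟩, fun i => hq i (f i)⟩
end

section
/- Let G = (V, E) be a tree rooted at a vertex r, and for v ∈ V let D(v) denote the set of descendants of v in the rooted tree (including v itself). Let u : V → ℚ≥0 be an additive set function (u(X) = Σ_{v∈X} u(v)), let q ∈ ℚ, and let v ∈ V be a vertex such that u(D(w)) < q for every child w of v. If 𝒫 is a partition of V into nonempty parts, each inducing a connected subgraph of G and each satisfying u(P) ≥ q for all P ∈ 𝒫, then D(v) is entirely contained in the part of 𝒫 that contains v. -/
/-- In a tree rooted at `r`, the descendants of `v` (including `v` itself):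
those vertices `x` such that `v` lies on the unique path from `r` to `x`. -/
def descendants {V : Type*} (G : SimpleGraph V) (r v : V) : Set V :=
  {x | G.dist r x = G.dist r v + G.dist v x}

/-- In a tree rooted at `r`, `w` is a child of `v` if it is a neighbor of `v`
that is farther from the root. -/
def IsChild {V : Type*} (G : SimpleGraph V) (r v w : V) : Prop :=
  G.Adj v w ∧ G.dist r w = G.dist r v + 1

theorem parent_unique {V : Type*} {G : SimpleGraph V} (hG : G.IsTree) {r a b c : V}
    (hb : G.Adj b a) (hc : G.Adj c a) (hdb : G.dist r a = G.dist r b + 1)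
    (hdc : G.dist r a = G.dist r c + 1) : b = c := by
  -- Geodesics from `r` to `b` and to `c`, extended to `a`, are both the unique path from `r` to `a`.
  obtain ⟨p, hp⟩ := hG.connected.exists_walk_length_eq_dist r b
  obtain ⟨p', hp'⟩ := hG.connected.exists_walk_length_eq_dist r c
  have h1 : (p.concat hb).IsPath :=
    SimpleGraph.Walk.isPath_of_length_eq_dist _ (by simp [hp, hdb])
  have h2 : (p'.concat hc).IsPath :=
    SimpleGraph.Walk.isPath_of_length_eq_dist _ (by simp [hp', hdc])
  have h := (hG.existsUnique_path r a).unique h1 h2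
  have := congrArg SimpleGraph.Walk.penultimate h
  simpa using this

theorem exists_adj_dist_succ {V : Type*} {G : SimpleGraph V} (hG : G.Connected) {x y : V}
    (hne : x ≠ y) : ∃ c, G.Adj x c ∧ G.dist x y = G.dist c y + 1 := by
  obtain ⟨p, hp⟩ := hG.exists_walk_length_eq_dist x y
  cases p with
  | nil => exact absurd rfl hne
  | @cons _ c _ h p =>
    refine ⟨c, h, ?_⟩
    have h1 := SimpleGraph.dist_le p
    have h2 := hG.dist_triangle (u := x) (v := c) (w := y)
    rw [SimpleGraph.dist_eq_one_iff_adj.2 h] at h2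
    rw [SimpleGraph.Walk.length_cons] at hp
    omega

/-- For a child `w` of `v`, every edge leaving `D(w)` ends at `v`. -/
theorem mem_descendants_of_adj {V : Type*} {G : SimpleGraph V} (hG : G.IsTree) {r v w a b : V}
    (hw : IsChild G r v w) (ha : a ∈ descendants G r w) (hab : G.Adj a b) (hbv : b ≠ v) :
    b ∈ descendants G r w := by
  simp only [descendants, Set.mem_ofPred_eq] at *
  have hC := hG.connected
  have t1 := hC.dist_triangle (u := r) (v := w) (w := b)
  have t2 := hC.dist_triangle (u := w) (v := a) (w := b)
  rw [SimpleGraph.dist_eq_one_iff_adj.2 hab] at t2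
  rcases hG.dist_eq_dist_add_one_of_adj r hab with h | h
  · -- Here `b` is the parent of `a`.
    by_cases haw : a = w
    · subst haw
      exact absurd (parent_unique hG hab.symm hw.1 h hw.2) hbv
    · obtain ⟨c, hac, hc⟩ := exists_adj_dist_succ hC haw
      have t3 := hC.dist_triangle (u := r) (v := w) (w := c)
      have e1 := G.dist_comm (u := a) (v := w)
      have e2 := G.dist_comm (u := c) (v := w)
      have hcb : b = c := by
        apply parent_unique hG hab.symm hac.symm h
        rcases hG.dist_eq_dist_add_one_of_adj r hac with h' | h' <;> omega
      subst hcb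
      omega
  · omega

/-- If every child subtree of `v` has `u`-value less than `q`, and `Ps` is a partition
of the vertex set of the tree into nonempty connected parts each of `u`-value at least `q`,
then `D(v)` is entirely contained in the part of `Ps` containing `v`. -/
theorem descendants_subset_part {V : Type*} [Fintype V]
    (G : SimpleGraph V) (hG : G.IsTree) (r : V)
    (u : V → ℚ) (hnn : ∀ x, 0 ≤ u x) (q : ℚ) (v : V)
    (hv : ∀ w, IsChild G r v w → setVal u (descendants G r w) < q)
    (Ps : Set (Set V))
    (hne : ∀ P ∈ Ps, P.Nonempty)
    (hconn : ∀ P ∈ Ps, ConnOn G P)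
    (hdisj : Ps.PairwiseDisjoint id)
    (hcover : ⋃₀ Ps = Set.univ)
    (hval : ∀ P ∈ Ps, q ≤ setVal u P) :
    ∀ P ∈ Ps, v ∈ P → descendants G r v ⊆ P := by
  intro P hP hvP x hx
  by_contra hxP
  obtain ⟨Q, hQ, hxQ⟩ : x ∈ ⋃₀ Ps := hcover ▸ Set.mem_univ x
  have hvQ : v ∉ Q := fun h => by
    have hPQ : P = Q := hdisj.elim_set hP hQ v hvP h
    exact hxP (hPQ ▸ hxQ)
  have hvx : v ≠ x := fun h => hvQ (h ▸ hxQ)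
  have hC := hG.connected
  obtain ⟨w, hvw, hd⟩ := exists_adj_dist_succ hC hvx
  have hx' : G.dist r x = G.dist r v + G.dist v x := hx
  have t := hC.dist_triangle (u := r) (v := w) (w := x)
  have hrw : G.dist r w = G.dist r v + 1 := by
    rcases hG.dist_eq_dist_add_one_of_adj r hvw with h | h <;> omega
  have hchild : IsChild G r v w := ⟨hvw, hrw⟩
  have hxw : x ∈ descendants G r w := by
    change G.dist r x = G.dist r w + G.dist w x
    omega
  have hstep : ∀ a b : Q, (G.induce Q).Walk a b →
      (a : V) ∈ descendants G r w → (b : V) ∈ descendants G r w := by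
    intro a b p
    induction p with
    | nil => exact id
    | @cons a c b h p ih =>
      exact fun ha => ih (mem_descendants_of_adj hG hchild ha h fun hc => hvQ (hc ▸ c.2))
  have hsub : Q ⊆ descendants G r w := fun y hy => by
    obtain ⟨p⟩ := (hconn Q hQ).preconnected ⟨x, hxQ⟩ ⟨y, hy⟩
    exact hstep _ _ p hxw
  have hle : setVal u Q ≤ setVal u (descendants G r w) := by
    classical
    unfold setVal
    rw [finsum_mem_eq_toFinset_sum, finsum_mem_eq_toFinset_sum]
    exact Finset.sum_le_sum_of_subset_of_nonneg (Set.toFinset_subset_toFinset.2 hsub)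
      fun i _ _ => hnn i
  exact absurd (hval Q hQ) (not_le.2 (hle.trans_lt (hv w hchild)))
end

section
/- Let G = (V, E) be a tree rooted at a vertex r, with D(v) the set of descendants of v (including v). Let N be a nonempty finite set of players, for each j ∈ N let u_j : V → ℚ≥0 be an additive set function, and let (q_j)_{j ∈ N} be rationals such that u_j(V) ≥ q_j for every j ∈ N. Then there exist a player i ∈ N and a vertex v ∈ V such that u_i(D(v)) ≥ q_i and, for every child w of v and every player j ∈ N, u_j(D(w)) < q_j. -/
lemma descendants_root {V : Type*} (G : SimpleGraph V) (r : V) :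
    descendants G r r = Set.univ := by
  ext x
  simp [descendants]

/-- In a tree rooted at `r`, if each player `j` values the whole vertex set at least `q_j`,
then there are a player `i` and a vertex `v` with `u_i(D(v)) ≥ q_i` such that
`u_j(D(w)) < q_j` for every child `w` of `v` and every player `j`. -/
theorem last_diminisher_vertex_exists {V N : Type*} [Fintype V] [Fintype N] [Nonempty N]
    (G : SimpleGraph V) (hG : G.IsTree) (r : V)
    (u : N → V → ℚ) (hnn : ∀ j x, 0 ≤ u j x)
    (q : N → ℚ) (hq : ∀ j, q j ≤ setVal (u j) Set.univ) :
    ∃ (i : N) (v : V), q i ≤ setVal (u i) (descendants G r v) ∧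
      ∀ w, IsChild G r v w → ∀ j, setVal (u j) (descendants G r w) < q j := by
  have hne : {v : V | ∃ i, q i ≤ setVal (u i) (descendants G r v)}.Nonempty := by
    obtain ⟨i⟩ := ‹Nonempty N›
    exact ⟨r, i, by rw [descendants_root]; exact hq i⟩
  obtain ⟨v, ⟨i, hi⟩, hmax⟩ :=
    Set.exists_max_image _ (fun v => G.dist r v) (Set.toFinite _) hne
  refine ⟨i, v, hi, fun w hw j => ?_⟩
  by_contra hj
  have hle : G.dist r w ≤ G.dist r v := hmax w ⟨j, not_lt.mp hj⟩
  have hchild : G.dist r w = G.dist r v + 1 := hw.2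
  omega
end

section
/- Let X = {x_1, …, x_{3s}} be a set of 3s elements and 𝒯 = {T_1, …, T_r} a family of 3-element subsets of X with r ≥ s; for x ∈ X let p_x = |{T ∈ 𝒯 : x ∈ T}| and assume 3·p_x ≤ n for every x, where n = 3s + r + 1. Construct the CFD instance I = (G, N, 𝒰) as follows. G is a path whose vertices, in order, are v_{T_1}^1, v_{T_1}^2, v_{T_1}^3, v_{T_2}^1, …, v_{T_r}^3, then b_1, …, b_s, then w. N consists of one player i_T for each T ∈ 𝒯, one player i_x for each x ∈ X, and a dummy player d. Utilities: u_{i_T}(v_T^k) = 1/(3n) for k ∈ {1,2,3}, u_{i_T}(b_j) = 1/n for each j ∈ [s], u_{i_T}(w) = (n − s − 1)/n, and u_{i_T} is 0 elsewhere; u_{i_x}(v_T^k) = 1/n for every T with x ∈ T and every k ∈ {1,2,3}, u_{i_x}(w) = (n − 3p_x)/n, and u_{i_x} is 0 elsewhere; u_d(w) = 1 and u_d is 0 elsewhere. Then X can be covered by s pairwise disjoint sets from 𝒯 (an exact cover) if and only if I admits a proportional valid allocation. -/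
/-- Items of the X3C reduction: the path has `3r` small vertices (three per set `T_i`,
in order), then `s` big vertices, then the vertex `w`; we identify the `j`-th vertex of
the path with `j : Fin (3r + s + 1)`. -/
abbrev X3CItem (s r : ℕ) := Fin (3 * r + s + 1)

/-- Players of the X3C reduction: a player `i_T` for each set `T` (left), a player `i_x`
for each element `x` (middle), and the dummy player `d` (right). -/
abbrev X3CPlayer (s r : ℕ) := Fin r ⊕ Fin (3 * s) ⊕ Unit

/-- Utility functions of the X3C reduction (here `n = 3s + r + 1` is the number of
players, vertex `v_{T_i}^k` is the item `3i + (k-1)`, big vertex `b_j` is the item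
`3r + (j-1)`, and `w` is the item `3r + s`). -/
noncomputable def x3cUtil (s r : ℕ) (T : Fin r → Finset (Fin (3 * s))) :
    X3CPlayer s r → X3CItem s r → ℚ
  | Sum.inl i, v =>
      if (v : ℕ) < 3 * r ∧ (v : ℕ) / 3 = (i : ℕ) then 1 / (3 * ((3 * s + r + 1 : ℕ) : ℚ))
      else if 3 * r ≤ (v : ℕ) ∧ (v : ℕ) < 3 * r + s then 1 / ((3 * s + r + 1 : ℕ) : ℚ)
      else if (v : ℕ) = 3 * r + s then
        (((3 * s + r + 1 : ℕ) : ℚ) - (s : ℚ) - 1) / ((3 * s + r + 1 : ℕ) : ℚ)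
      else 0
  | Sum.inr (Sum.inl x), v =>
      if (v : ℕ) < 3 * r ∧ ∃ i : Fin r, (i : ℕ) = (v : ℕ) / 3 ∧ x ∈ T i then
        1 / ((3 * s + r + 1 : ℕ) : ℚ)
      else if (v : ℕ) = 3 * r + s then
        (((3 * s + r + 1 : ℕ) : ℚ)
            - 3 * ((Finset.univ.filter (fun i => x ∈ T i)).card : ℚ))
          / ((3 * s + r + 1 : ℕ) : ℚ)
      else 0
  | Sum.inr (Sum.inr _), v => if (v : ℕ) = 3 * r + s then 1 else 0

/-! ### Bundle values and connectivity -/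

lemma setVal_singleton {V : Type*} (u : V → ℚ) (a : V) : setVal u {a} = u a := by
  simp [setVal]

lemma setVal_eq_sum {V : Type*} [Fintype V] [DecidableEq V] (u : V → ℚ) (X : Set V)
    [DecidablePred (· ∈ X)] : setVal u X = ∑ v ∈ Finset.univ.filter (· ∈ X), u v := by
  unfold setVal
  rw [← finsum_mem_coe_finset]
  simp

lemma exists_mem_ne_zero_of_setVal_pos {V : Type*} {u : V → ℚ} {X : Set V}
    (h : 0 < setVal u X) : ∃ v ∈ X, u v ≠ 0 :=
  exists_ne_zero_of_finsum_mem_ne_zero h.ne'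

lemma preconnOn_of_hub {V : Type*} {G : SimpleGraph V} {X : Set V} (m : V) (hm : m ∈ X)
    (h : ∀ v ∈ X, v = m ∨ G.Adj v m) : PreconnOn G X := by
  have key : ∀ v : X, (G.induce X).Reachable v ⟨m, hm⟩ := by
    rintro ⟨v, hv⟩
    rcases h v hv with rfl | hadj
    · exact SimpleGraph.Reachable.refl _
    · exact SimpleGraph.Adj.reachable (by simpa using hadj)
  intro a b
  exact (key a).trans (key b).symm

/-! ### Small vertices and set players -/

/-- The three small vertices of the set with index `i`. -/
def smallTriple {s r : ℕ} (i : Fin r) : Finset (X3CItem s r) :=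
  {⟨3 * i, by omega⟩, ⟨3 * i + 1, by omega⟩, ⟨3 * i + 2, by omega⟩}

lemma mem_smallTriple {s r : ℕ} (i : Fin r) (v : X3CItem s r) :
    v ∈ smallTriple i ↔ (v : ℕ) / 3 = i := by
  simp only [smallTriple, Finset.mem_insert, Finset.mem_singleton, Fin.ext_iff]
  omega

lemma card_smallTriple {s r : ℕ} (i : Fin r) : (smallTriple i : Finset (X3CItem s r)).card = 3 := by
  simp [smallTriple, Fin.ext_iff]

lemma util_of_mem_smallTriple {s r : ℕ} (T : Fin r → Finset (Fin (3 * s))) (i : Fin r)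
    {v : X3CItem s r} (hv : v ∈ smallTriple i) :
    x3cUtil s r T (Sum.inl i) v = 1 / (3 * ((3 * s + r + 1 : ℕ) : ℚ)) := by
  rw [mem_smallTriple] at hv
  have : (v : ℕ) < 3 * r := by omega
  simp only [x3cUtil, this, hv, and_self, if_true]

/-- A set player owning neither a big vertex nor `w` reaches its share only with all three of its
small vertices: any two of them are worth `2/(3n)`. -/
lemma small_mem_of_share_le {s r : ℕ} (T : Fin r → Finset (Fin (3 * s))) (i : Fin r)
    (X : Set (X3CItem s r)) (hX : ∀ v ∈ X, (v : ℕ) < 3 * r)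
    (h : 1 / ((3 * s + r + 1 : ℕ) : ℚ) ≤ setVal (x3cUtil s r T (Sum.inl i)) X)
    (a : X3CItem s r) (ha : (a : ℕ) / 3 = i) : a ∈ X := by
  classical
  by_contra haX
  rw [← mem_smallTriple] at ha
  have hn : (0 : ℚ) < ((3 * s + r + 1 : ℕ) : ℚ) := by positivity
  have h1 : setVal (x3cUtil s r T (Sum.inl i)) X
      ≤ ∑ v ∈ (smallTriple i).erase a, x3cUtil s r T (Sum.inl i) v := by
    rw [setVal_eq_sum, ← Finset.sum_filter_of_ne (p := (· ∈ smallTriple i))]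
    · apply Finset.sum_le_sum_of_subset_of_nonneg
      · intro v hv
        simp only [Finset.mem_filter, Finset.mem_univ, true_and] at hv
        exact Finset.mem_erase.2 ⟨fun e => haX (e ▸ hv.1), hv.2⟩
      · intro v hv _
        rw [util_of_mem_smallTriple T i (Finset.mem_of_mem_erase hv)]
        positivity
    · intro v hv hne
      have hv' := hX v (by simpa using hv)
      rw [mem_smallTriple]
      by_contra hvi
      apply hne
      simp only [x3cUtil]
      rw [if_neg (by tauto), if_neg (by omega), if_neg (by omega)]
  rw [Finset.sum_congr rfl
      (fun v hv => util_of_mem_smallTriple T i (Finset.mem_of_mem_erase hv)),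
    Finset.sum_const, Finset.card_erase_of_mem ha, card_smallTriple] at h1
  have h2 : (3 - 1) • (1 / (3 * ((3 * s + r + 1 : ℕ) : ℚ)))
      < 1 / ((3 * s + r + 1 : ℕ) : ℚ) := by
    rw [nsmul_eq_mul, ← div_div, div_div, mul_one_div, div_lt_div_iff₀ (by positivity) hn]
    norm_num
    linarith
  linarith

/-! ### From an exact cover to an allocation -/

lemma proportional_of_exactCover (s r : ℕ)
    (T : Fin r → Finset (Fin (3 * s))) (hT : ∀ i, (T i).card = 3)
    (S : Finset (Fin r)) (hS : S.card = s) (hcov : S.biUnion T = Finset.univ) :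
    ∃ π : X3CPlayer s r → Set (X3CItem s r),
        ValidAlloc (SimpleGraph.pathGraph (3 * r + s + 1)) π ∧
        ∀ p, 1 / ((3 * s + r + 1 : ℕ) : ℚ) ≤ setVal (x3cUtil s r T p) (π p) := by
  classical
  have hn : (0 : ℚ) < ((3 * s + r + 1 : ℕ) : ℚ) := by positivity
  -- `g` numbers the members of the cover, `k i` the elements of `T i`.
  obtain ⟨g, hg, hginj⟩ : ∃ g : Fin r → ℕ, (∀ i ∈ S, g i < s) ∧
      ∀ i ∈ S, ∀ j ∈ S, g i = g j → i = j := by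
    let e := S.equivFinOfCardEq hS
    refine ⟨fun i => if h : i ∈ S then e ⟨i, h⟩ else 0, ?_, ?_⟩
    · intro i hi
      simp [hi]
    · intro i hi j hj h
      simpa [hi, hj, Fin.val_inj] using h
  obtain ⟨k, hk, hkinj⟩ : ∃ k : Fin r → Fin (3 * s) → ℕ, (∀ i, ∀ x ∈ T i, k i x < 3) ∧
      ∀ i, ∀ x ∈ T i, ∀ y ∈ T i, k i x = k i y → x = y := by
    let e := fun i => (T i).equivFinOfCardEq (hT i)
    refine ⟨fun i x => if h : x ∈ T i then e i ⟨x, h⟩ else 0, ?_, ?_⟩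
    · intro i x hx
      simp [hx]
    · intro i x hx y hy h
      simpa [hx, hy, Fin.val_inj] using h
  have hc : ∀ x, ∃ i ∈ S, x ∈ T i := by
    intro x
    have : x ∈ S.biUnion T := by simp [hcov]
    simpa using this
  choose c hcS hcT using hc
  let big : Fin r → X3CItem s r := fun i => Fin.ofNat _ (3 * r + g i)
  have hbig : ∀ i ∈ S, (big i : ℕ) = 3 * r + g i := fun i hi =>
    Nat.mod_eq_of_lt (by have := hg i hi; omega)
  have hpos_lt : ∀ x, 3 * (c x : ℕ) + k (c x) x < 3 * r + s + 1 := fun x => by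
    have := hk _ x (hcT x); have := (c x).2; omega
  let pos : Fin (3 * s) → X3CItem s r := fun x => ⟨3 * (c x : ℕ) + k (c x) x, hpos_lt x⟩
  have hpos : ∀ x, (pos x : ℕ) / 3 = c x := fun x => by
    have := hk _ x (hcT x)
    simp only [pos]; omega
  have hpos_inj : ∀ x y, pos x = pos y → x = y := by
    intro x y h
    have h1 : c x = c y := by
      rw [Fin.ext_iff, ← hpos x, ← hpos y, h]
    have h2 : 3 * (c x : ℕ) + k (c x) x = 3 * (c y : ℕ) + k (c y) y := Fin.ext_iff.1 h
    rw [h1] at h2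
    exact hkinj (c y) x (h1 ▸ hcT x) y (hcT y) (by omega)
  let π : X3CPlayer s r → Set (X3CItem s r) := fun p => match p with
    | Sum.inl i => if i ∈ S then {big i} else (smallTriple i : Finset (X3CItem s r))
    | Sum.inr (Sum.inl x) => {pos x}
    | Sum.inr (Sum.inr _) => {Fin.last _}
  have hsing : ∀ a : X3CItem s r,
      PreconnOn (SimpleGraph.pathGraph (3 * r + s + 1)) {a} := fun a =>
    preconnOn_of_hub a rfl (fun v hv => Or.inl hv)
  -- Membership in the bundles in terms of positions on the path; disjointness reads off this.
  have hL : ∀ i v, v ∈ π (Sum.inl i) →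
      (i ∈ S ∧ (v : ℕ) = 3 * r + g i) ∨ (i ∉ S ∧ (v : ℕ) / 3 = i) := by
    intro i v hv
    by_cases hi : i ∈ S
    · simp only [π, hi, if_true, Set.mem_singleton_iff] at hv
      exact Or.inl ⟨hi, hv ▸ hbig i hi⟩
    · simp only [π, hi, if_false, Finset.mem_coe, mem_smallTriple] at hv
      exact Or.inr ⟨hi, hv⟩
  have hM : ∀ x v, v ∈ π (Sum.inr (Sum.inl x)) → v = pos x := fun x v hv => hv
  have hD : ∀ t v, v ∈ π (Sum.inr (Sum.inr t)) → (v : ℕ) = 3 * r + s := fun t v hv => by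
    have : v = Fin.last _ := hv
    rw [this]; rfl
  have hLM : ∀ i x v, v ∈ π (Sum.inl i) → v ∈ π (Sum.inr (Sum.inl x)) → False := by
    intro i x v h1 h2
    have h3 := hpos x
    rw [← hM x v h2] at h3
    rcases hL i v h1 with ⟨hi, h⟩ | ⟨hi, h⟩
    · have := (c x).2; omega
    · exact hi ((Fin.ext (h.symm.trans h3) : i = c x) ▸ hcS x)
  have hLD : ∀ i t v, v ∈ π (Sum.inl i) → v ∈ π (Sum.inr (Sum.inr t)) → False := by
    intro i t v h1 h2
    have h3 := hD t v h2
    rcases hL i v h1 with ⟨hi, h⟩ | ⟨hi, h⟩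
    · have := hg i hi; omega
    · have := i.2; omega
  have hMD : ∀ x t v, v ∈ π (Sum.inr (Sum.inl x)) → v ∈ π (Sum.inr (Sum.inr t)) → False := by
    intro x t v h1 h2
    have h3 := hD t v h2
    have h4 := hpos x
    rw [← hM x v h1] at h4
    have := (c x).2
    omega
  refine ⟨π, ⟨?_, ?_⟩, ?_⟩
  · rintro (i | x | t)
    · by_cases hi : i ∈ S
      · simpa only [π, hi, if_true] using hsing _
      · simp only [π, hi, if_false]
        have hlt : 3 * (i : ℕ) + 1 < 3 * r + s + 1 := by omega
        refine preconnOn_of_hub ⟨3 * i + 1, hlt⟩ ?_ ?_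
        · rw [Finset.mem_coe, mem_smallTriple]
          simp only []
          omega
        · intro v hv
          rw [Finset.mem_coe, mem_smallTriple] at hv
          simp only [SimpleGraph.pathGraph_adj, Fin.ext_iff]
          omega
    · exact hsing _
    · exact hsing _
  · intro p q hpq
    rw [Set.disjoint_left]
    intro v hp hq
    rcases p with i | x | t <;> rcases q with j | y | t'
    · have hij : i ≠ j := fun e => hpq (by rw [e])
      rcases hL i v hp with ⟨hi, h⟩ | ⟨hi, h⟩ <;> rcases hL j v hq with ⟨hj, h'⟩ | ⟨hj, h'⟩
      · exact hij (hginj i hi j hj (by omega))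
      · have := j.2; omega
      · have := i.2; omega
      · exact hij (Fin.ext (h.symm.trans h'))
    · exact hLM i y v hp hq
    · exact hLD i t' v hp hq
    · exact hLM j x v hq hp
    · exact hpq (by rw [hpos_inj x y ((hM x v hp).symm.trans (hM y v hq))])
    · exact hMD x t' v hp hq
    · exact hLD j t v hq hp
    · exact hMD y t v hq hp
    · exact hpq rfl
  · rintro (i | x | t)
    · by_cases hi : i ∈ S
      · simp only [π, hi, if_true, setVal_singleton, x3cUtil]
        have h1 := hbig i hi
        have h2 := hg i hi
        rw [if_neg (by omega), if_pos (by omega)]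
      · simp only [π, hi, if_false]
        rw [setVal_eq_sum]
        simp only [Finset.mem_coe, Finset.filter_univ_mem]
        rw [Finset.sum_congr rfl (fun v hv => util_of_mem_smallTriple T i hv), Finset.sum_const,
          card_smallTriple, nsmul_eq_mul]
        apply le_of_eq
        field_simp
        norm_num
    · simp only [π, setVal_singleton, x3cUtil]
      have h1 := hpos x
      rw [if_pos ⟨by have := (c x).2; omega, c x, h1.symm, hcT x⟩]
    · simp only [π, setVal_singleton, x3cUtil, Fin.val_last, if_true]
      rw [div_le_one hn]
      exact_mod_cast (by omega : 1 ≤ 3 * s + r + 1)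

/-! ### From an allocation to an exact cover -/

/-- A family of at most `s` triples covering `3s` points has exactly `s` members and they are
pairwise disjoint. -/
lemma exactCover_of_cover (s r : ℕ)
    (T : Fin r → Finset (Fin (3 * s))) (hT : ∀ i, (T i).card = 3)
    (S : Finset (Fin r)) (hS : S.card ≤ s) (hcov : S.biUnion T = Finset.univ) :
    S.card = s ∧ ∀ i ∈ S, ∀ j ∈ S, i ≠ j → Disjoint (T i) (T j) := by
  classical
  have hsum : ∀ A : Finset (Fin r), ∑ i ∈ A, (T i).card = A.card * 3 := fun A => by
    simp [hT]
  have hU : (S.biUnion T).card = 3 * s := by simp [hcov]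
  have h1 : (S.biUnion T).card ≤ S.card * 3 := hsum S ▸ Finset.card_biUnion_le
  refine ⟨by omega, fun i hi j hj hij => ?_⟩
  by_contra hd
  -- If `T i` and `T j` meet, their union has at most five points, and the other sets of `S`
  -- cover at most `3 (s - 2)` more.
  rw [← Finset.card_union_eq_card_add_card] at hd
  have h2 : (T i ∪ T j).card ≤ (T i).card + (T j).card := Finset.card_union_le _ _
  have hj' : j ∈ S.erase i := Finset.mem_erase.2 ⟨hij.symm, hj⟩
  have h3 : S.biUnion T ⊆ (T i ∪ T j) ∪ ((S.erase i).erase j).biUnion T := by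
    intro x hx
    simp only [Finset.mem_biUnion, Finset.mem_union, Finset.mem_erase] at hx ⊢
    obtain ⟨l, hl, hxl⟩ := hx
    by_cases hli : l = i
    · subst hli; tauto
    · by_cases hlj : l = j
      · subst hlj; tauto
      · exact Or.inr ⟨l, ⟨hlj, hli, hl⟩, hxl⟩
  have h4 := (Finset.card_le_card h3).trans (Finset.card_union_le _ _)
  have h5 : (((S.erase i).erase j).biUnion T).card ≤ ((S.erase i).erase j).card * 3 :=
    hsum _ ▸ Finset.card_biUnion_le
  have h6 := Finset.card_erase_add_one hi
  have h7 := Finset.card_erase_add_one hj'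
  have := hT i
  have := hT j
  omega

lemma exactCover_of_proportional (s r : ℕ)
    (T : Fin r → Finset (Fin (3 * s))) (hT : ∀ i, (T i).card = 3)
    (π : X3CPlayer s r → Set (X3CItem s r))
    (hdisj : ∀ i j, i ≠ j → Disjoint (π i) (π j))
    (hprop : ∀ p, 1 / ((3 * s + r + 1 : ℕ) : ℚ) ≤ setVal (x3cUtil s r T p) (π p)) :
    ∃ S : Finset (Fin r), S.card = s ∧
        (∀ i ∈ S, ∀ j ∈ S, i ≠ j → Disjoint (T i) (T j)) ∧
        S.biUnion T = Finset.univ := by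
  classical
  have hn : (0 : ℚ) < 1 / ((3 * s + r + 1 : ℕ) : ℚ) := by positivity
  have hw : ∃ w ∈ π (Sum.inr (Sum.inr ())), (w : ℕ) = 3 * r + s := by
    obtain ⟨w, hw, hne⟩ := exists_mem_ne_zero_of_setVal_pos (hn.trans_le (hprop _))
    refine ⟨w, hw, ?_⟩
    by_contra h
    exact hne (by simp only [x3cUtil, h, if_false])
  obtain ⟨w, hwd, hw⟩ := hw
  have hlt : ∀ p, p ≠ Sum.inr (Sum.inr ()) → ∀ v ∈ π p, (v : ℕ) < 3 * r + s := by
    intro p hp v hv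
    have : v ≠ w := fun e => Set.disjoint_left.1 (hdisj _ _ hp) hv (e ▸ hwd)
    have : (v : ℕ) ≠ w := fun e => this (Fin.ext e)
    omega
  let S : Finset (Fin r) :=
    Finset.univ.filter (fun i => ∃ v ∈ π (Sum.inl i), 3 * r ≤ (v : ℕ))
  have hScard : S.card ≤ s := by
    have hb : ∀ i, ∃ v : X3CItem s r, i ∈ S → v ∈ π (Sum.inl i) ∧ 3 * r ≤ (v : ℕ) := by
      intro i
      by_cases hi : i ∈ S
      · obtain ⟨v, hv⟩ := (Finset.mem_filter.1 hi).2
        exact ⟨v, fun _ => hv⟩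
      · exact ⟨w, fun h => absurd h hi⟩
    choose b hb using hb
    have : S.card ≤ (Finset.Ico (3 * r) (3 * r + s)).card := by
      apply Finset.card_le_card_of_injOn (fun i => (b i : ℕ))
      · intro i hi
        have := hb i hi
        simp only [Finset.coe_Ico, Set.mem_Ico]
        exact ⟨this.2, hlt _ (by simp) _ this.1⟩
      · intro i hi j hj hij
        by_contra hne
        have hbij : b i = b j := Fin.ext hij
        exact Set.disjoint_left.1 (hdisj (Sum.inl i) (Sum.inl j) (by simpa using hne))
          (hb i hi).1 (hbij ▸ (hb j hj).1)
    simpa using this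
  have hcov : S.biUnion T = Finset.univ := by
    rw [Finset.eq_univ_iff_forall]
    intro x
    obtain ⟨v, hv, hne⟩ :=
      exists_mem_ne_zero_of_setVal_pos (hn.trans_le (hprop (Sum.inr (Sum.inl x))))
    have hvlt := hlt _ (by simp) v hv
    have : (v : ℕ) < 3 * r ∧ ∃ i : Fin r, (i : ℕ) = (v : ℕ) / 3 ∧ x ∈ T i := by
      by_contra h
      apply hne
      simp only [x3cUtil]
      rw [if_neg h, if_neg (by omega)]
    obtain ⟨-, i, hiv, hx⟩ := this
    refine Finset.mem_biUnion.2 ⟨i, ?_, hx⟩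
    by_contra hi
    have hsmall : ∀ v ∈ π (Sum.inl i), (v : ℕ) < 3 * r := by
      intro v hv
      by_contra h
      exact hi (Finset.mem_filter.2 ⟨Finset.mem_univ _, v, hv, by omega⟩)
    exact Set.disjoint_left.1 (hdisj (Sum.inl i) (Sum.inr (Sum.inl x)) (by simp))
      (small_mem_of_share_le T i _ hsmall (hprop _) v hiv.symm) hv
  obtain ⟨h1, h2⟩ := exactCover_of_cover s r T hT S hScard hcov
  exact ⟨S, h1, h2, hcov⟩

/-- X3C reduces to proportional connected fair division on a path: the set
`X = Fin (3s)` has an exact cover by `s` of the sets `T_1, …, T_r` iff the constructed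
CFD instance admits a proportional valid allocation. -/
theorem x3c_iff_proportional_on_path (s r : ℕ) (hsr : s ≤ r)
    (T : Fin r → Finset (Fin (3 * s))) (hT : ∀ i, (T i).card = 3)
    (hfreq : ∀ x : Fin (3 * s),
      3 * (Finset.univ.filter (fun i => x ∈ T i)).card ≤ 3 * s + r + 1) :
    (∃ S : Finset (Fin r), S.card = s ∧
        (∀ i ∈ S, ∀ j ∈ S, i ≠ j → Disjoint (T i) (T j)) ∧
        S.biUnion T = Finset.univ) ↔
      (∃ π : X3CPlayer s r → Set (X3CItem s r),
        ValidAlloc (SimpleGraph.pathGraph (3 * r + s + 1)) π ∧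
        ∀ p, 1 / ((3 * s + r + 1 : ℕ) : ℚ) ≤ setVal (x3cUtil s r T p) (π p)) := by
  constructor
  · rintro ⟨S, hS, -, hcov⟩
    exact proportional_of_exactCover s r T hT S hS hcov
  · rintro ⟨π, ⟨-, hdisj⟩, hprop⟩
    exact exactCover_of_proportional s r T hT π hdisj hprop
end

section
/- Let a_1, …, a_h be positive integers with Σ_{i=1}^h a_i = 2k for a positive integer k. Construct the CFD instance I = (G, N, 𝒰) where G = (V, E), V = {v_1, …, v_h, w_1, w_2}, E = {{v_i, w_1} : i ∈ [h]} ∪ {{v_i, w_2} : i ∈ [h]} (a bipartite graph), N = {1, 2}, and both players have the same utility u with u(v_i) = a_i/(2k) for i ∈ [h] and u(w_1) = u(w_2) = 0. Then I admits a proportional valid allocation (each of the two players receives a connected bundle of value at least 1/2) if and only if there exists H' ⊆ [h] with Σ_{i ∈ H'} a_i = k. -/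
open Classical in
theorem setVal_elim {h : ℕ} (f : Fin h → ℚ) (X : Set (Fin h ⊕ Fin 2)) :
    setVal (Sum.elim f (fun _ => 0)) X = ∑ i with Sum.inl i ∈ X, f i := by
  unfold setVal
  rw [finsum_mem_def, finsum_eq_sum_of_fintype, Fintype.sum_sum_type, Finset.sum_filter]
  simp [Set.indicator_apply]

open Classical in
theorem half_le_setVal_iff {h k : ℕ} (hk : 1 ≤ k) (a : Fin h → ℕ) (X : Set (Fin h ⊕ Fin 2)) :
    (1 : ℚ) / 2 ≤ setVal (Sum.elim (fun i => (a i : ℚ) / (2 * (k : ℚ))) (fun _ => 0)) X ↔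
      k ≤ ∑ i with Sum.inl i ∈ X, a i := by
  have hk0 : (0 : ℚ) < k := by exact_mod_cast hk
  rw [setVal_elim, ← Finset.sum_div, le_div_iff₀ (by positivity), ← Nat.cast_sum,
    show (1 : ℚ) / 2 * (2 * k) = k by ring, Nat.cast_le]

/-- A bundle whose only right vertex is `q` induces a star centred at `q`. -/
theorem preconnOn_star {h : ℕ} (X : Set (Fin h ⊕ Fin 2)) (q : Fin 2)
    (hX : ∀ r, Sum.inr r ∈ X ↔ r = q) :
    PreconnOn (completeBipartiteGraph (Fin h) (Fin 2)) X := by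
  have hq : Sum.inr q ∈ X := (hX q).2 rfl
  have key : ∀ x : X, ((completeBipartiteGraph (Fin h) (Fin 2)).induce X).Reachable x
      ⟨Sum.inr q, hq⟩ := by
    rintro ⟨i | r, hx⟩
    · exact SimpleGraph.Adj.reachable (by simp)
    · obtain rfl := (hX r).1 hx
      exact SimpleGraph.Reachable.refl _
  exact fun x y => (key x).trans (key y).symm

/-- Partition reduces to proportional connected fair division on a complete bipartite
graph: with items `v_1, …, v_h` (left) and `w_1, w_2` (right), two players sharing the
utility `u(v_i) = a_i / 2k`, `u(w_1) = u(w_2) = 0`, a proportional valid allocation exists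
iff some subset of the `a_i` sums to `k`. -/
theorem partition_iff_proportional_bipartite (h k : ℕ) (hk : 1 ≤ k)
    (a : Fin h → ℕ) (hpos : ∀ i, 0 < a i) (hsum : ∑ i, a i = 2 * k) :
    (∃ π : Fin 2 → Set (Fin h ⊕ Fin 2),
        ValidAlloc (completeBipartiteGraph (Fin h) (Fin 2)) π ∧
        ∀ p, (1 : ℚ) / 2 ≤
          setVal (Sum.elim (fun i => (a i : ℚ) / (2 * (k : ℚ))) (fun _ => 0)) (π p)) ↔
      (∃ H' : Finset (Fin h), ∑ i ∈ H', a i = k) := by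
  classical
  simp only [half_le_setVal_iff hk]
  constructor
  · rintro ⟨π, ⟨-, hdisj⟩, hval⟩
    refine ⟨Finset.univ.filter fun i => Sum.inl i ∈ π 0, ?_⟩
    have hd : Disjoint (Finset.univ.filter fun i => Sum.inl i ∈ π 0)
        (Finset.univ.filter fun i => Sum.inl i ∈ π 1) :=
      Finset.disjoint_filter.2 fun i _ h0 h1 =>
        Set.disjoint_left.1 (hdisj 0 1 (by decide)) h0 h1
    have hle := Finset.sum_le_sum_of_subset (f := a) (Finset.subset_univ
      ((Finset.univ.filter fun i => Sum.inl i ∈ π 0) ∪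
        (Finset.univ.filter fun i => Sum.inl i ∈ π 1)))
    rw [Finset.sum_union hd, hsum] at hle
    have h0 := hval 0
    have h1 := hval 1
    omega
  · rintro ⟨H, hH⟩
    refine ⟨fun p => {x | Sum.elim (fun i => i ∈ H ↔ p = 0) (fun r => r = p) x},
      ⟨fun p => preconnOn_star _ p fun r => by simp, ?_⟩, ?_⟩
    · intro p q hpq
      rw [Set.disjoint_left]
      rintro (i | r) hp hq
      · simp only [Set.mem_setOf_eq, Sum.elim_inl] at hp hq
        -- `p = 0 ↔ q = 0` forces `p = q`, as there are only two players.
        have := hp.symm.trans hq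
        omega
      · exact hpq (Eq.trans (Eq.symm hp) hq)
    · have hc := Finset.sum_add_sum_compl H a
      intro p
      fin_cases p
      · simp [hH]
      · have hf : (Finset.univ.filter fun i => i ∉ H) = Hᶜ := by ext; simp
        simp [hf]
        omega
end

section
/- Consider the CFD instance I = (G, N, 𝒰) where G is the cycle on vertices v_1, …, v_8 (edges {v_i, v_{i+1}} for i ∈ [7] and {v_1, v_8}), N = {1, 2, 3, 4}, players 1 and 2 share the utility u with values (1, 4, 4, 1, 3, 2, 2, 3)/20 on (v_1, …, v_8), and players 3 and 4 share the utility u' with values (4, 4, 1, 3, 2, 2, 3, 1)/20 on (v_1, …, v_8). Then mms_i(I) = 1/4 for every player i ∈ {1, 2, 3, 4}. -/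
/-- The cycle on the eight vertices `v_1, …, v_8` (vertex `v_j` is `j - 1 : Fin 8`),
with edges `{v_j, v_{j+1}}` for `j ∈ [7]` and the edge `{v_1, v_8}`. -/
def cycle8 : SimpleGraph (Fin 8) :=
  SimpleGraph.fromRel (fun x y => (x : ℕ) + 1 = (y : ℕ) ∨ ((x : ℕ) = 7 ∧ (y : ℕ) = 0))

/-- The common utility of players 1 and 2: values `(1,4,4,1,3,2,2,3)/20` on `v_1, …, v_8`. -/
def utilA : Fin 8 → ℚ := fun v => ![1, 4, 4, 1, 3, 2, 2, 3] v / 20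

/-- The common utility of players 3 and 4: values `(4,4,1,3,2,2,3,1)/20` on `v_1, …, v_8`. -/
def utilB : Fin 8 → ℚ := fun v => ![4, 4, 1, 3, 2, 2, 3, 1] v / 20

/-- Averaging: four parts covering items of total value `1` cannot all exceed `1/4`. -/
lemma exists_part_le {u : Fin 8 → ℚ} (hu : ∑ v, u v = 1) {P : Fin 4 → Set (Fin 8)}
    (hP : IsConnPartition cycle8 P) : ∃ j, setVal u (P j) ≤ (1 : ℚ) / 4 := by
  obtain ⟨-, -, hdisj, hcover⟩ := hP
  have htotal : ∑ j, setVal u (P j) = 1 := by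
    have h := finsum_mem_iUnion (f := u) (t := P) (fun j k hjk => hdisj j k hjk)
      (fun j => Set.toFinite _)
    rw [hcover, finsum_mem_univ, finsum_eq_sum_of_fintype, hu, finsum_eq_sum_of_fintype] at h
    exact h.symm
  by_contra! hlt
  have := Finset.sum_lt_sum_of_nonempty (s := Finset.univ) Finset.univ_nonempty
    (fun j _ => hlt j)
  rw [htotal] at this
  norm_num at this

/-- A perfect matching of the cycle into edges `a j — b j`, each worth `1/4`, is a partition
guaranteeing `1/4`. -/
lemma exists_partition_of_matching {u : Fin 8 → ℚ} (a b : Fin 4 → Fin 8)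
    (hadj : ∀ j, cycle8.Adj (a j) (b j))
    (hdisj : ∀ j k, j ≠ k → a j ≠ a k ∧ a j ≠ b k ∧ b j ≠ a k ∧ b j ≠ b k)
    (hcover : ∀ v, ∃ j, v = a j ∨ v = b j)
    (hval : ∀ j, u (a j) + u (b j) = 1 / 4) :
    ∃ P : Fin 4 → Set (Fin 8), IsConnPartition cycle8 P ∧
      ∀ j, (1 : ℚ) / 4 ≤ setVal u (P j) := by
  refine ⟨fun j => {a j, b j}, ⟨fun j => Set.insert_nonempty _ _, fun j =>
    SimpleGraph.induce_pair_connected_of_adj (hadj j), fun j k hjk => ?_, ?_⟩, fun j => ?_⟩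
  · have := hdisj j k hjk
    simp only [Set.disjoint_left, Set.mem_insert_iff, Set.mem_singleton_iff]
    rintro v (rfl | rfl) <;> tauto
  · ext v
    simpa using hcover v
  · rw [setVal, finsum_mem_pair (hadj j).ne, hval]

/-- In the cycle instance with four players (players 1 and 2 with utility `utilA`, players
3 and 4 with utility `utilB`), every player's maximin share equals `1/4`: there is a
partition into 4 nonempty connected parts each of value at least `1/4` to her, and every
such partition has a part of value at most `1/4` to her. -/
theorem mms_on_cycle_eq_quarter :
    ∀ u ∈ ({utilA, utilA, utilB, utilB} : Set (Fin 8 → ℚ)),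
      (∃ P : Fin 4 → Set (Fin 8), IsConnPartition cycle8 P ∧
          ∀ j, (1 : ℚ) / 4 ≤ setVal u (P j)) ∧
        (∀ P : Fin 4 → Set (Fin 8), IsConnPartition cycle8 P →
          ∃ j, setVal u (P j) ≤ (1 : ℚ) / 4) := by
  intro u hu
  have hu' : u = utilA ∨ u = utilB := by simpa using hu
  rcases hu' with rfl | rfl
  · refine ⟨exists_partition_of_matching ![0, 2, 4, 6] ![1, 3, 5, 7] ?_ (by decide) (by decide) ?_,
      fun P hP => exists_part_le ?_ hP⟩
    · intro j
      fin_cases j <;> simp [cycle8]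
    · intro j
      fin_cases j <;> simp [utilA, Matrix.cons_val] <;> norm_num
    · norm_num [utilA, Fin.sum_univ_succ]
  · refine ⟨exists_partition_of_matching ![7, 1, 3, 5] ![0, 2, 4, 6] ?_ (by decide) (by decide) ?_,
      fun P hP => exists_part_le ?_ hP⟩
    · intro j
      fin_cases j <;> simp [cycle8]
    · intro j
      fin_cases j <;> simp [utilB, Matrix.cons_val] <;> norm_num
    · norm_num [utilB, Fin.sum_univ_succ]
end

section
/- Consider the CFD instance I = (G, N, 𝒰) where G is the cycle on vertices v_1, …, v_8 (edges {v_i, v_{i+1}} for i ∈ [7] and {v_1, v_8}), N = {1, 2, 3, 4}, players 1 and 2 share the utility u with values (1, 4, 4, 1, 3, 2, 2, 3)/20 on (v_1, …, v_8), and players 3 and 4 share the utility u' with values (4, 4, 1, 3, 2, 2, 3, 1)/20 on (v_1, …, v_8). Then there is no valid allocation π such that u_i(π(i)) ≥ 1/4 for every player i ∈ {1, 2, 3, 4}. -/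
lemma setVal_coe {V : Type*} (u : V → ℚ) (s : Finset V) : setVal u (s : Set V) = ∑ x ∈ s, u x := by
  simp only [setVal, Finset.mem_coe]
  exact finsum_mem_finset_eq_sum u s

lemma two_le_card {u : Fin 8 → ℚ} (hu : ∀ x, u x < 1 / 4) {s : Finset (Fin 8)}
    (hs : 1 / 4 ≤ setVal u (s : Set (Fin 8))) : 2 ≤ s.card := by
  rw [setVal_coe] at hs
  by_contra! hlt
  obtain h | h : s.card = 0 ∨ s.card = 1 := by omega
  · rw [Finset.card_eq_zero] at h
    subst h
    norm_num at hs
  · obtain ⟨a, rfl⟩ := Finset.card_eq_one.mp h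
    rw [Finset.sum_singleton] at hs
    exact absurd hs (not_le.mpr (hu a))

lemma eq_add_one_of_adj {a b : Fin 8} (h : cycle8.Adj a b) : b = a + 1 ∨ a = b + 1 := by
  simp only [cycle8, SimpleGraph.fromRel_adj] at h
  revert a b
  decide

/-- A connected two-element set of the cycle is an arc; addition in `Fin 8` is cyclic. -/
lemma exists_eq_arc {s : Finset (Fin 8)} (hc : s.card = 2)
    (hs : PreconnOn cycle8 (s : Set (Fin 8))) : ∃ x, s = {x, x + 1} := by
  obtain ⟨a, b, hab, rfl⟩ := Finset.card_eq_two.mp hc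
  -- The first step of a walk from `a` to `b` inside `{a, b}` must already lead to `b`.
  have hadj : cycle8.Adj a b := by
    obtain ⟨w⟩ := hs ⟨a, by simp⟩ ⟨b, by simp⟩
    cases w with
    | nil => exact absurd rfl hab
    | @cons _ c _ h _ =>
      have h' : cycle8.Adj a c := h
      have hc : (c : Fin 8) = a ∨ (c : Fin 8) = b := by simpa using c.2
      rcases hc with hc | hc
      · rw [hc] at h'
        exact absurd h' (SimpleGraph.irrefl _)
      · rwa [hc] at h'
  rcases eq_add_one_of_adj hadj with rfl | rfl
  · exact ⟨a, rfl⟩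
  · exact ⟨b, Finset.pair_comm _ _⟩

lemma setVal_arc (u : Fin 8 → ℚ) (x : Fin 8) :
    setVal u (({x, x + 1} : Finset (Fin 8)) : Set (Fin 8)) = u x + u (x + 1) := by
  rw [setVal_coe, Finset.sum_pair]
  revert x
  decide

lemma utilA_arc {x : Fin 8} (h : 1 / 4 ≤ utilA x + utilA (x + 1)) :
    x ∈ ({0, 1, 2, 4, 6} : Finset (Fin 8)) := by
  fin_cases x <;> first | decide | (revert h; decide +kernel)

lemma utilB_arc {x : Fin 8} (h : 1 / 4 ≤ utilB x + utilB (x + 1)) :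
    x ∈ ({0, 1, 3, 5, 7} : Finset (Fin 8)) := by
  fin_cases x <;> first | decide | (revert h; decide +kernel)

/-- Two acceptable arcs for players 1, 2 and two for players 3, 4 are never pairwise disjoint. -/
lemma arcs_not_disjoint : ∀ a ∈ ({0, 1, 2, 4, 6} : Finset (Fin 8)),
    ∀ b ∈ ({0, 1, 2, 4, 6} : Finset (Fin 8)),
    Disjoint ({a, a + 1} : Finset (Fin 8)) {b, b + 1} →
    ∀ c ∈ ({0, 1, 3, 5, 7} : Finset (Fin 8)),
    Disjoint ({a, a + 1} : Finset (Fin 8)) {c, c + 1} →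
    Disjoint ({b, b + 1} : Finset (Fin 8)) {c, c + 1} →
    ∀ d ∈ ({0, 1, 3, 5, 7} : Finset (Fin 8)),
    Disjoint ({a, a + 1} : Finset (Fin 8)) {d, d + 1} →
    Disjoint ({b, b + 1} : Finset (Fin 8)) {d, d + 1} →
    ¬ Disjoint ({c, c + 1} : Finset (Fin 8)) {d, d + 1} := by
  decide +kernel

/-- In the cycle instance with four players (players 1 and 2 with utility `utilA`, players
3 and 4 with utility `utilB`), no valid allocation gives every player value at least `1/4`. -/
theorem no_quarter_allocation_on_cycle :
    ¬ ∃ π : Fin 4 → Set (Fin 8), ValidAlloc cycle8 π ∧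
        ∀ i, (1 : ℚ) / 4 ≤ setVal (![utilA, utilA, utilB, utilB] i) (π i) := by
  classical
  rintro ⟨π, ⟨hconn, hdisj⟩, hval⟩
  obtain ⟨s, rfl⟩ : ∃ s : Fin 4 → Finset (Fin 8), π = fun i => (s i : Set (Fin 8)) :=
    ⟨fun i => (π i).toFinset, by simp⟩
  have hd : ∀ i j, i ≠ j → Disjoint (s i) (s j) := fun i j hij =>
    Finset.disjoint_coe.mp (hdisj i j hij)
  have hsmall : ∀ i x, (![utilA, utilA, utilB, utilB] : Fin 4 → Fin 8 → ℚ) i x < 1 / 4 := by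
    decide +kernel
  have htwo : ∀ i, 2 ≤ (s i).card := fun i => two_le_card (hsmall i) (hval i)
  have hsum : ∑ i, (s i).card ≤ 8 := by
    rw [← Finset.card_biUnion fun i _ j _ hij => hd i j hij]
    exact (Finset.card_le_univ _).trans (by simp)
  have hcard : ∀ i, (s i).card = 2 := by
    rw [Fin.sum_univ_four] at hsum
    have h0 := htwo 0
    have h1 := htwo 1
    have h2 := htwo 2
    have h3 := htwo 3
    intro i
    fin_cases i <;> simp only [Fin.zero_eta, Fin.mk_one, Fin.reduceFinMk] <;> omega
  choose x hx using fun i => exists_eq_arc (hcard i) (hconn i)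
  have hv : ∀ i, (1 : ℚ) / 4 ≤ (![utilA, utilA, utilB, utilB] : Fin 4 → Fin 8 → ℚ) i (x i) +
      (![utilA, utilA, utilB, utilB] : Fin 4 → Fin 8 → ℚ) i (x i + 1) := by
    intro i
    have h := hval i
    simp only [hx i] at h
    rwa [setVal_arc] at h
  have hd' : ∀ i j, i ≠ j → Disjoint ({x i, x i + 1} : Finset (Fin 8)) {x j, x j + 1} := by
    intro i j hij
    rw [← hx i, ← hx j]
    exact hd i j hij
  exact arcs_not_disjoint (x 0) (utilA_arc (hv 0)) (x 1) (utilA_arc (hv 1))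
    (hd' 0 1 (by decide)) (x 2) (utilB_arc (hv 2)) (hd' 0 2 (by decide)) (hd' 1 2 (by decide))
    (x 3) (utilB_arc (hv 3)) (hd' 0 3 (by decide)) (hd' 1 3 (by decide)) (hd' 2 3 (by decide))
end
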